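/- Let q be an odd prime such that p = 2q + 1 is also prime, and let D be a nontrivial difference set in the additive group ZMod p with parameter λ. Then D has Paley parameters: either |D| = q and 2λ = q − 1, or |D| = q + 1 and 2λ = q + 1. -/

import Mathlib

/-- A subset `D` of the additive group `ZMod p` is a difference set with parameter `lam`
(a positive integer) if every nonzero `g : ZMod p` has exactly `lam` representations
`g = d₂ - d₁` with `d₁, d₂ ∈ D`. -/
def IsDiffSetZMod (p : ℕ) (D : Finset (ZMod p)) (lam : ℕ) : Prop :=
  0 < lam ∧ ∀ g : ZMod p, g ≠ 0 →
    ((D ×ˢ D).filter (fun x => x.2 - x.1 = g)).card = lam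

/-!
Counting the ordered pairs of distinct elements of `D` by their difference gives
`k (k - 1) = lam (v - 1) = 2 q lam`, where `k` is the size of `D` and `v = 2 q + 1` that of the
group. As `k` and `k - 1` are coprime, a prime power `q` divides one of them, and as both lie
strictly between `0` and `2 q`, that one is `q` itself. Cancelling `q` determines `lam`.
-/

open Finset

section DifferenceSets

variable {G : Type*} [AddGroup G] [DecidableEq G] {D : Finset G} {lam : ℕ}

/-- The difference sets of a group `G`: every nonzero element is a difference of two elements
of `D` in exactly `lam` ways. With `lam = 0` allowed, sets of at most one element are included. -/
def IsDifferenceSet (D : Finset G) (lam : ℕ) : Prop :=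
  ∀ g : G, g ≠ 0 → #{x ∈ D ×ˢ D | x.2 - x.1 = g} = lam

theorem filter_offDiag_sub_eq (D : Finset G) {g : G} (hg : g ≠ 0) :
    {x ∈ D.offDiag | x.2 - x.1 = g} = {x ∈ D ×ˢ D | x.2 - x.1 = g} := by
  ext ⟨a, b⟩
  have ne_of_sub_eq (h : b - a = g) : a ≠ b := by
    rintro rfl
    exact hg (h ▸ sub_self a)
  simp only [mem_filter, mem_offDiag, mem_product]
  tauto

variable [Fintype G]

theorem IsDifferenceSet.card_offDiag (hD : IsDifferenceSet D lam) :
    #D.offDiag = lam * (Fintype.card G - 1) := by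
  have sub_mem : ∀ x ∈ D.offDiag, x.2 - x.1 ∈ univ.erase (0 : G) := fun x hx ↦
    mem_erase.2 ⟨sub_ne_zero.2 (mem_offDiag.1 hx).2.2.symm, mem_univ _⟩
  calc #D.offDiag
      = ∑ g ∈ univ.erase (0 : G), #{x ∈ D.offDiag | x.2 - x.1 = g} :=
        card_eq_sum_card_fiberwise sub_mem
    _ = ∑ _g ∈ univ.erase (0 : G), lam := sum_congr rfl fun g hg ↦ by
        rw [filter_offDiag_sub_eq D (ne_of_mem_erase hg), hD g (ne_of_mem_erase hg)]
    _ = lam * (Fintype.card G - 1) := by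
        rw [sum_const, card_erase_of_mem (mem_univ _), card_univ, smul_eq_mul, mul_comm]

theorem IsDifferenceSet.card_mul_card_sub_one (hD : IsDifferenceSet D lam) :
    #D * (#D - 1) = lam * (Fintype.card G - 1) := by
  rw [← hD.card_offDiag, offDiag_card, Nat.mul_sub_one]

end DifferenceSets

theorem eq_or_eq_add_one_of_isPrimePow_dvd_mul_sub_one {q k : ℕ} (hq : IsPrimePow q)
    (one_lt : 1 < k) (lt_two_mul : k < 2 * q) (dvd : q ∣ k * (k - 1)) : k = q ∨ k = q + 1 := by
  have coprime : k.Coprime (k - 1) := (Nat.coprime_self_sub_right one_lt.le).2 k.coprime_one_right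
  rcases (coprime.isPrimePow_dvd_mul hq).1 dvd with dvd_k | dvd_pred
  · exact .inl (Nat.eq_of_dvd_of_lt_two_mul (by lia) dvd_k lt_two_mul)
  · have : k - 1 = q := Nat.eq_of_dvd_of_lt_two_mul (by lia) dvd_pred (by lia)
    lia

theorem diff_set_safe_prime_paley_parameters_general {G : Type*} [AddGroup G] [Fintype G]
    [DecidableEq G] {q : ℕ} (hq : IsPrimePow q) (hG : Fintype.card G = 2 * q + 1)
    {D : Finset G} {lam : ℕ} (hD : IsDifferenceSet D lam)
    (two_le : 2 ≤ #D) (le_sub_two : #D ≤ Fintype.card G - 2) :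
    (#D = q ∧ 2 * lam = q - 1) ∨ (#D = q + 1 ∧ 2 * lam = q + 1) := by
  have count : #D * (#D - 1) = q * (2 * lam) := by
    rw [hD.card_mul_card_sub_one, hG, Nat.add_sub_cancel]
    ring
  rcases eq_or_eq_add_one_of_isPrimePow_dvd_mul_sub_one hq two_le (by lia) ⟨_, count⟩
    with card_eq | card_eq <;> rw [card_eq] at count
  · exact .inl ⟨card_eq, (Nat.eq_of_mul_eq_mul_left hq.pos count).symm⟩
  · rw [Nat.add_sub_cancel, mul_comm] at count
    exact .inr ⟨card_eq, (Nat.eq_of_mul_eq_mul_left hq.pos count).symm⟩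

/-- If `q` is an odd prime such that `p = 2q + 1` is also prime, then every nontrivial
difference set `D` in `ZMod p` has Paley parameters: either `|D| = q` and `2λ = q - 1`,
or `|D| = q + 1` and `2λ = q + 1`. -/
theorem diff_set_safe_prime_paley_parameters (q p : ℕ) (hq : q.Prime) (hqodd : Odd q)
    (hpdef : p = 2 * q + 1) (hp : p.Prime)
    (D : Finset (ZMod p)) (lam : ℕ) (hD : IsDiffSetZMod p D lam)
    (hnt1 : 2 ≤ D.card) (hnt2 : D.card ≤ p - 2) :
    (D.card = q ∧ 2 * lam = q - 1) ∨ (D.card = q + 1 ∧ 2 * lam = q + 1) := by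
  have : NeZero p := ⟨hp.ne_zero⟩
  exact diff_set_safe_prime_paley_parameters_general hq.isPrimePow ((ZMod.card p).trans hpdef)
    hD.2 hnt1 ((ZMod.card p).symm ▸ hnt2)
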